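/- Let k be a positive even integer, f₀ ∈ M_k(SL(2,ℤ)), f₁ ∈ M_{k-2}(SL(2,ℤ)) with f₁ ≢ 0, and f = f₀ + E₂ f₁. Let W_f and Q_f be as in the context (with α = 6/(πi)). Then there exist κ_i and κ_ρ in (1/2)ℤ with κ_i, κ_ρ ≥ 1/2 such that lim_{z→i} (z−i)² Q_f(z) = (1/4 − κ_i²)/(4π²) and lim_{z→ρ} (z−ρ)² Q_f(z) = (1/4 − κ_ρ²)/(4π²), where i = √−1 and ρ = (1+√−3)/2; moreover, the integer 2κ_i is odd and the integer 2κ_ρ is not divisible by 3. (Equivalently, the local exponents of y″ = −4π² Q_f y at i and ρ are 1/2 ± κ_i and 1/2 ± κ_ρ with gcd(2κ_i,2) = gcd(2κ_ρ,3) = 1.) -/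

import Mathlib

noncomputable section

open Complex Matrix Filter Topology

abbrev SL2R := Matrix.SpecialLinearGroup (Fin 2) ℝ
abbrev SL2Z := Matrix.SpecialLinearGroup (Fin 2) ℤ

/-- The upper half-plane, as a subset of `ℂ`. -/
def UHP : Set ℂ := {z : ℂ | 0 < z.im}

/-- The embedding of `SL(2,ℤ)` into `SL(2,ℝ)`. -/
def toR : SL2Z →* SL2R := Matrix.SpecialLinearGroup.map (Int.castRingHom ℝ)

/-- `SL(2,ℤ)` as a subgroup of `SL(2,ℝ)`. -/
def SL2ZR : Subgroup SL2R := Subgroup.map toR ⊤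

/-- Möbius action of a real matrix on a complex number. -/
def moeb (γ : SL2R) (z : ℂ) : ℂ :=
  ((γ.1 0 0 : ℂ) * z + (γ.1 0 1 : ℂ)) / ((γ.1 1 0 : ℂ) * z + (γ.1 1 1 : ℂ))

/-- The automorphy factor `cz + d`. -/
def jfac (γ : SL2R) (z : ℂ) : ℂ := (γ.1 1 0 : ℂ) * z + (γ.1 1 1 : ℂ)

/-- A holomorphic modular form of weight `k` and character `χ` on `Γ ≤ SL(2,ℝ)`
(for `Γ` commensurable with `SL(2,ℤ)`): holomorphic on `ℍ`, satisfying the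
transformation law, and holomorphic (bounded) at every cusp. -/
structure IsModularForm (Γ : Subgroup SL2R) (χ : SL2R → ℂ) (k : ℤ) (f : ℂ → ℂ) : Prop where
  holo : DifferentiableOn ℂ f UHP
  transform : ∀ γ ∈ Γ, ∀ z ∈ UHP, f (moeb γ z) = χ γ * jfac γ z ^ k * f z
  bdd_at_cusps : ∀ σ : SL2Z, ∃ C : ℝ, ∀ z ∈ UHP, 1 ≤ z.im →
    ‖jfac (toR σ) z ^ (-k) * f (moeb (toR σ) z)‖ ≤ C

/-- A finite-order character of `Γ`. -/
def IsCharacter (Γ : Subgroup SL2R) (χ : SL2R → ℂ) : Prop :=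
  (∀ γ ∈ Γ, ∀ δ ∈ Γ, χ (γ * δ) = χ γ * χ δ) ∧
    ∃ n : ℕ, 0 < n ∧ ∀ γ ∈ Γ, χ γ ^ n = 1

/-- `φ` is quasimodular of weight 2 and depth 1 on `Γ`, with constant `α`:
`(cz+d)⁻² φ(γz) = φ(z) + α c/(cz+d)`. -/
def IsQuasiWt2 (Γ : Subgroup SL2R) (α : ℂ) (φ : ℂ → ℂ) : Prop :=
  ∀ γ ∈ Γ, ∀ z ∈ UHP,
    (jfac γ z)⁻¹ ^ 2 * φ (moeb γ z) = φ z + α * (γ.1 1 0 : ℂ) / jfac γ z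

/-- `f` has vanishing order `ν` at the cusp `∞`, with respect to `q_N = e^{2πiz/N}`:
`q_N^{-ν}·f(z)` tends to a nonzero constant as `Im z → ∞`. -/
def VOrder (N : ℝ) (f : ℂ → ℂ) (ν : ℝ) : Prop :=
  ∃ c : ℂ, c ≠ 0 ∧ ∀ ε : ℝ, 0 < ε → ∃ Y : ℝ, ∀ z : ℂ, Y ≤ z.im →
    ‖Complex.exp (-(2 * Real.pi * Complex.I * (ν : ℂ) * z / (N : ℂ))) * f z - c‖ < ε


/-- `q = e^{2πiz}`. -/
def qexp (z : ℂ) : ℂ := Complex.exp (2 * Real.pi * Complex.I * z)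

/-- The quasimodular Eisenstein series `E₂(z) = 1 - 24 ∑_{n≥1} σ₁(n) qⁿ`. -/
def E2 (z : ℂ) : ℂ :=
  1 - 24 * ∑' n : ℕ, (ArithmeticFunction.sigma 1 (n + 1) : ℂ) * qexp z ^ (n + 1)

/-- The expression `Q_f = -(1/4π²)[f″/f - (f′/f)(W′/W) + (3/4)(W′/W)² - (1/2)(W″/W)]`,
i.e. formally `-(1/4π²)·g″/g` for `g = f/√W`. -/
def Qformula (f W : ℂ → ℂ) (z : ℂ) : ℂ :=
  -(1 / (4 * (Real.pi : ℂ) ^ 2)) *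
    (deriv (deriv f) z / f z - (deriv f z / f z) * (deriv W z / W z)
      + (3 / 4) * (deriv W z / W z) ^ 2 - (1 / 2) * (deriv (deriv W) z / W z))

/-- The elliptic point `ρ = (1+√-3)/2` of `SL(2,ℤ)`. -/
def ρell : ℂ := (1 + Real.sqrt 3 * Complex.I) / 2

/-!
Put `h = α f₁` with `α = 6 / (π i)` and `u = z f + h`. Then `(u, f)` transforms under `SL(2, ℤ)`
like a vector of weight `k - 1` forms for the standard representation, and `W_f = u f′ - u′ f` is
its Wronskian, so that `u / √W_f` and `f / √W_f` span the solutions of `y″ = -4π² Q_f y`.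

Let `γ` fix `z₀ ∈ ℍ`, with automorphy factor `j` at `z₀`. The combinations `u - z₀ f` and
`u - conj z₀ f` are eigenvectors of `γ`, and comparing leading terms at `z₀` shows that their orders
`a` and `b` satisfy `(j²)^(a - b) = j²`. If `j²` has order `N > 1` this says `a - b ≡ 1 mod N`. In
particular `a ≠ b`, so `f` has order `min a b`, `W_f` has order `a + b - 1`, and the local exponents
at `z₀` are `1/2 ± (a - b)/2`. Here `N = 2` at `i` and `N = 3` at `ρ`.
-/

section MeromorphicOrder

variable {𝕜 : Type*} [NontriviallyNormedField 𝕜] {F G : 𝕜 → 𝕜} {z₀ : 𝕜} {m n : ℤ}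

theorem zpow_deriv_eq_of_eventually_comp_eq_mul {φ χ : 𝕜 → 𝕜} {φ' : 𝕜}
    (hF : MeromorphicAt F z₀) (hn : meromorphicOrderAt F z₀ = n)
    (hφ : HasDerivAt φ φ' z₀) (hφ' : φ' ≠ 0) (hfix : φ z₀ = z₀) (hχ : ContinuousAt χ z₀)
    (h : ∀ᶠ z in 𝓝[≠] z₀, F (φ z) = χ z * F z) : φ' ^ n = χ z₀ := by
  obtain ⟨g, hg, hg₀, hFg⟩ := (meromorphicOrderAt_eq_int_iff hF).1 hn
  have hφ_tendsto : Tendsto φ (𝓝[≠] z₀) (𝓝[≠] z₀) := by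
    simpa only [hfix] using hφ.tendsto_nhdsNE hφ'
  have hslope : Tendsto (fun z ↦ (φ z - z₀) / (z - z₀)) (𝓝[≠] z₀) (𝓝 φ') := by
    simpa [slope_fun_def_field, hfix] using hasDerivAt_iff_tendsto_slope.1 hφ
  have hgφ : Tendsto (fun z ↦ g (φ z)) (𝓝[≠] z₀) (𝓝 (g z₀)) :=
    hg.continuousAt.tendsto.comp (hφ_tendsto.mono_right nhdsWithin_le_nhds)
  have hlhs : Tendsto (fun z ↦ ((φ z - z₀) / (z - z₀)) ^ n * g (φ z)) (𝓝[≠] z₀)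
      (𝓝 (φ' ^ n * g z₀)) :=
    (hslope.zpow₀ n (.inl hφ')).mul hgφ
  have hrhs : Tendsto (fun z ↦ χ z * g z) (𝓝[≠] z₀) (𝓝 (χ z₀ * g z₀)) :=
    (hχ.mul hg.continuousAt).tendsto.mono_left nhdsWithin_le_nhds
  refine mul_right_cancel₀ hg₀ (tendsto_nhds_unique (hlhs.congr' ?_) hrhs)
  filter_upwards [self_mem_nhdsWithin, h, hFg, hφ_tendsto.eventually hFg] with z hz hz' hFz hFφz
  have hpow : (z - z₀) ^ n ≠ 0 := zpow_ne_zero n (sub_ne_zero.2 hz)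
  rw [hFφz, hFz, smul_eq_mul, smul_eq_mul] at hz'
  rw [div_zpow, div_mul_eq_mul_div, div_eq_iff hpow, hz']
  ring

theorem meromorphicOrderAt_const_mul {c : 𝕜} (hc : c ≠ 0) (F : 𝕜 → 𝕜) (z₀ : 𝕜) :
    meromorphicOrderAt (fun z ↦ c * F z) z₀ = meromorphicOrderAt F z₀ :=
  meromorphicOrderAt_mul_of_ne_zero (g := fun _ ↦ c) analyticAt_const hc

variable [CompleteSpace 𝕜]

theorem tendsto_sub_mul_logDeriv (hF : MeromorphicAt F z₀) (hn : meromorphicOrderAt F z₀ = n) :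
    Tendsto (fun z ↦ (z - z₀) * logDeriv F z) (𝓝[≠] z₀) (𝓝 n) := by
  obtain ⟨g, hg, hg₀, hFg⟩ := (meromorphicOrderAt_eq_int_iff hF).1 hn
  have hlim : Tendsto (fun z ↦ n + (z - z₀) * logDeriv g z) (𝓝[≠] z₀) (𝓝 n) := by
    have hcont : ContinuousAt (fun z ↦ n + (z - z₀) * logDeriv g z) z₀ :=
      continuousAt_const.add ((continuousAt_id.sub continuousAt_const).mul
        (hg.deriv.continuousAt.div hg.continuousAt hg₀))
    simpa using hcont.tendsto.mono_left nhdsWithin_le_nhds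
  refine hlim.congr' ?_
  filter_upwards [self_mem_nhdsWithin, logDeriv_congr_nhdsNE hFg,
    nhdsWithin_le_nhds hg.eventually_analyticAt,
    nhdsWithin_le_nhds (hg.continuousAt.eventually_ne hg₀)] with z hz hFz hgz hgz₀
  have hsub : z - z₀ ≠ 0 := sub_ne_zero.2 hz
  have hdiff : DifferentiableAt 𝕜 (fun w ↦ w - z₀) z := by fun_prop
  have hlog : logDeriv F z = n / (z - z₀) + logDeriv g z := by
    simp only [smul_eq_mul] at hFz
    rw [hFz, logDeriv_mul (f := fun w ↦ (w - z₀) ^ n) z (zpow_ne_zero n hsub) hgz₀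
      (hdiff.zpow (.inl hsub)) hgz.differentiableAt, logDeriv_fun_zpow hdiff]
    simp [logDeriv_apply, div_eq_mul_inv]
  rw [hlog]
  field_simp

variable [CharZero 𝕜]

theorem tendsto_sub_sq_mul_deriv_deriv_div (hF : MeromorphicAt F z₀)
    (hn : meromorphicOrderAt F z₀ = n) :
    Tendsto (fun z ↦ (z - z₀) ^ 2 * (deriv (deriv F) z / F z)) (𝓝[≠] z₀) (𝓝 (n * (n - 1))) := by
  rcases eq_or_ne n 0 with rfl | hn₀
  · obtain ⟨g, hg, hg₀, hFg⟩ := (meromorphicOrderAt_eq_int_iff hF).1 hn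
    simp only [zpow_zero, one_smul] at hFg
    have hcont : ContinuousAt (fun z ↦ (z - z₀) ^ 2 * (deriv (deriv g) z / g z)) z₀ :=
      ((continuousAt_id.sub continuousAt_const).pow 2).mul
        (hg.deriv.deriv.continuousAt.div hg.continuousAt hg₀)
    have hlim : Tendsto (fun z ↦ (z - z₀) ^ 2 * (deriv (deriv g) z / g z)) (𝓝[≠] z₀)
        (𝓝 ((0 : ℤ) * ((0 : ℤ) - 1))) := by
      simpa using hcont.tendsto.mono_left nhdsWithin_le_nhds
    refine hlim.congr' ?_
    filter_upwards [hFg, EventuallyEq.nhdsNE_deriv (EventuallyEq.nhdsNE_deriv hFg)] with z hz hz''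
    rw [hz, hz'']
  · have hF' : meromorphicOrderAt (deriv F) z₀ = ↑(n - 1) :=
      meromorphicOrderAt_deriv_eq_sub_one (mod_cast hn₀) hn
    have hF'_ne : ∀ᶠ z in 𝓝[≠] z₀, deriv F z ≠ 0 :=
      (meromorphicOrderAt_ne_top_iff_eventually_ne_zero hF.deriv).1 (by simp [hF'])
    have hlim := (tendsto_sub_mul_logDeriv hF hn).mul (tendsto_sub_mul_logDeriv hF.deriv hF')
    push_cast at hlim
    refine hlim.congr' ?_
    filter_upwards [hF'_ne] with z hz
    simp only [logDeriv_apply]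
    field_simp

theorem meromorphicOrderAt_wronskian (hF : MeromorphicAt F z₀) (hG : MeromorphicAt G z₀)
    (hm : meromorphicOrderAt F z₀ = m) (hn : meromorphicOrderAt G z₀ = n) (hmn : m ≠ n) :
    meromorphicOrderAt (F * deriv G - deriv F * G) z₀ = ↑(m + n - 1) := by
  have hF_ne := (meromorphicOrderAt_ne_top_iff_eventually_ne_zero hF).1 (by simp [hm])
  have hG_ne := (meromorphicOrderAt_ne_top_iff_eventually_ne_zero hG).1 (by simp [hn])
  have hlog : MeromorphicAt ((· - z₀) * (logDeriv G - logDeriv F)) z₀ := by fun_prop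
  have hlim : Tendsto ((· - z₀) * (logDeriv G - logDeriv F)) (𝓝[≠] z₀) (𝓝 (n - m : 𝕜)) :=
    ((tendsto_sub_mul_logDeriv hG hn).sub (tendsto_sub_mul_logDeriv hF hm)).congr
      fun z ↦ (mul_sub _ _ _).symm
  have hlog_order : meromorphicOrderAt ((· - z₀) * (logDeriv G - logDeriv F)) z₀ = 0 :=
    (tendsto_ne_zero_iff_meromorphicOrderAt_eq_zero hlog).1
      ⟨_, sub_ne_zero.2 (mod_cast hmn.symm), hlim⟩
  have hfactor : F * deriv G - deriv F * G =ᶠ[𝓝[≠] z₀]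
      F * G * ((· - z₀)⁻¹ * ((· - z₀) * (logDeriv G - logDeriv F))) := by
    filter_upwards [self_mem_nhdsWithin, hF_ne, hG_ne] with z hz hFz hGz
    have hsub : z - z₀ ≠ 0 := sub_ne_zero.2 hz
    simp only [Pi.sub_apply, Pi.mul_apply, Pi.inv_apply, logDeriv_apply]
    field_simp
  have hinv : MeromorphicAt ((· - z₀)⁻¹ : 𝕜 → 𝕜) z₀ := by fun_prop
  have hinv_order : meromorphicOrderAt ((· - z₀)⁻¹ : 𝕜 → 𝕜) z₀ = ↑(-1 : ℤ) := by
    rw [meromorphicOrderAt_inv, meromorphicOrderAt_id_sub_const]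
    rfl
  rw [meromorphicOrderAt_congr hfactor, meromorphicOrderAt_mul (hF.mul hG) (hinv.mul hlog),
    meromorphicOrderAt_mul hF hG, meromorphicOrderAt_mul hinv hlog, hlog_order, hinv_order, hm, hn,
    add_zero, sub_eq_add_neg]
  rfl

end MeromorphicOrder

theorem tendsto_sub_sq_mul_Qformula {f W : ℂ → ℂ} {z₀ : ℂ} {m l : ℤ}
    (hf : MeromorphicAt f z₀) (hW : MeromorphicAt W z₀)
    (hm : meromorphicOrderAt f z₀ = m) (hl : meromorphicOrderAt W z₀ = l) :
    Tendsto (fun z ↦ (z - z₀) ^ 2 * Qformula f W z) (𝓝[≠] z₀)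
      (𝓝 ((1 / 4 - ((2 * m - l - 1) / 2) ^ 2) / (4 * (Real.pi : ℂ) ^ 2))) := by
  have hf₁ := tendsto_sub_mul_logDeriv hf hm
  have hf₂ := tendsto_sub_sq_mul_deriv_deriv_div hf hm
  have hW₁ := tendsto_sub_mul_logDeriv hW hl
  have hW₂ := tendsto_sub_sq_mul_deriv_deriv_div hW hl
  have hlim := (((hf₂.sub (hf₁.mul hW₁)).add ((hW₁.pow 2).const_mul (3 / 4))).sub
    (hW₂.const_mul (1 / 2))).const_mul (-(1 / (4 * (Real.pi : ℂ) ^ 2)))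
  convert hlim using 2
  · simp only [Qformula, logDeriv_apply]
    ring
  · ring

section QuasiPencil

/-- The combination `u - c f` of `u = z f + h` and `f`. For `h = α f₁` and `c ∈ ℂ` these are, up to
scalars and the factor `√W_f`, the solutions of `y″ = -4π² Q_f y` other than `f / √W_f`. -/
def quasiPencil (f h : ℂ → ℂ) (c z : ℂ) : ℂ := (z - c) * f z + h z

/-- The Wronskian `u f′ - u′ f` of `u = z f + h` and `f`, in the expanded form in which `W_f` is
given; `W_f` is the case `h = α f₁`. -/
def quasiWronskian (f h : ℂ → ℂ) (z : ℂ) : ℂ := -(f z) ^ 2 + (h z * deriv f z - deriv h z * f z)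

variable {f h : ℂ → ℂ} {c d z z₀ : ℂ} {a b : ℤ}

theorem hasDerivAt_quasiPencil (hf : DifferentiableAt ℂ f z) (hh : DifferentiableAt ℂ h z) (c : ℂ) :
    HasDerivAt (quasiPencil f h c) (f z + (z - c) * deriv f z + deriv h z) z := by
  have hderiv := (((hasDerivAt_id' z).sub_const c).mul hf.hasDerivAt).add hh.hasDerivAt
  rwa [one_mul] at hderiv

theorem quasiPencil_wronskian (hf : DifferentiableAt ℂ f z) (hh : DifferentiableAt ℂ h z)
    (c d : ℂ) :
    quasiPencil f h c z * deriv (quasiPencil f h d) z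
        - deriv (quasiPencil f h c) z * quasiPencil f h d z
      = (c - d) * quasiWronskian f h z := by
  rw [(hasDerivAt_quasiPencil hf hh c).deriv, (hasDerivAt_quasiPencil hf hh d).deriv]
  simp only [quasiPencil, quasiWronskian]
  ring

theorem quasiWronskian_const_mul (α : ℂ) (f f₁ : ℂ → ℂ) (z : ℂ) :
    quasiWronskian f (fun z ↦ α * f₁ z) z
      = -(f z) ^ 2 + α * (f₁ z * deriv f z - deriv f₁ z * f z) := by
  rw [quasiWronskian, deriv_const_mul_field]
  ring

theorem meromorphicAt_quasiPencil (hf : MeromorphicAt f z₀) (hh : MeromorphicAt h z₀) (c : ℂ) :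
    MeromorphicAt (quasiPencil f h c) z₀ := by
  unfold quasiPencil
  fun_prop

theorem meromorphicAt_quasiWronskian (hf : MeromorphicAt f z₀) (hh : MeromorphicAt h z₀) :
    MeromorphicAt (quasiWronskian f h) z₀ := by
  unfold quasiWronskian
  fun_prop

theorem meromorphicOrderAt_quasiWronskian (hf : MeromorphicAt f z₀) (hh : MeromorphicAt h z₀)
    (hcd : c ≠ d) (ha : meromorphicOrderAt (quasiPencil f h c) z₀ = a)
    (hb : meromorphicOrderAt (quasiPencil f h d) z₀ = b) (hab : a ≠ b) :
    meromorphicOrderAt (quasiWronskian f h) z₀ = ↑(a + b - 1) := by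
  have hwronskian := meromorphicOrderAt_wronskian (meromorphicAt_quasiPencil hf hh c)
    (meromorphicAt_quasiPencil hf hh d) ha hb hab
  rw [← hwronskian, ← meromorphicOrderAt_const_mul (sub_ne_zero.2 hcd)]
  refine meromorphicOrderAt_congr ?_
  filter_upwards [hf.eventually_analyticAt, hh.eventually_analyticAt] with z hfz hhz
  exact (quasiPencil_wronskian hfz.differentiableAt hhz.differentiableAt c d).symm

theorem meromorphicOrderAt_of_quasiPencil (hf : MeromorphicAt f z₀) (hh : MeromorphicAt h z₀)
    (hcd : c ≠ d) (ha : meromorphicOrderAt (quasiPencil f h c) z₀ = a)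
    (hb : meromorphicOrderAt (quasiPencil f h d) z₀ = b) (hab : a ≠ b) :
    meromorphicOrderAt f z₀ = ↑(min a b) := by
  have hdiff : quasiPencil f h c + -quasiPencil f h d = fun z ↦ (d - c) * f z := by
    funext z
    simp only [Pi.add_apply, Pi.neg_apply, quasiPencil]
    ring
  rw [← meromorphicOrderAt_const_mul (sub_ne_zero.2 hcd.symm), ← hdiff,
    meromorphicOrderAt_add_of_ne (meromorphicAt_quasiPencil hf hh c)
      (meromorphicAt_quasiPencil hf hh d).neg, ← meromorphicOrderAt_neg, ha, hb]
  · rfl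
  · rw [← meromorphicOrderAt_neg, ha, hb]
    exact mod_cast hab

theorem tendsto_sub_sq_mul_Qformula_quasiWronskian (hf : MeromorphicAt f z₀)
    (hh : MeromorphicAt h z₀) (hcd : c ≠ d) (ha : meromorphicOrderAt (quasiPencil f h c) z₀ = a)
    (hb : meromorphicOrderAt (quasiPencil f h d) z₀ = b) (hab : a ≠ b) :
    Tendsto (fun z ↦ (z - z₀) ^ 2 * Qformula f (quasiWronskian f h) z) (𝓝[≠] z₀)
      (𝓝 ((1 / 4 - ((|a - b| : ℤ) / 2) ^ 2) / (4 * (Real.pi : ℂ) ^ 2))) := by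
  have hlim := tendsto_sub_sq_mul_Qformula hf (meromorphicAt_quasiWronskian hf hh)
    (meromorphicOrderAt_of_quasiPencil hf hh hcd ha hb hab)
    (meromorphicOrderAt_quasiWronskian hf hh hcd ha hb hab)
  have hexp : (2 * min a b - (a + b - 1) - 1) ^ 2 = |a - b| ^ 2 := by
    rcases le_total a b with hle | hle
    · rw [min_eq_left hle, sq_abs]
      ring
    · rw [min_eq_right hle, sq_abs]
      ring
  have hexp' : (2 * (min a b : ℤ) - (a + b - 1 : ℤ) - 1 : ℂ) ^ 2 = (|a - b| : ℤ) ^ 2 :=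
    mod_cast hexp
  rwa [div_pow, hexp', ← div_pow] at hlim

theorem meromorphicOrderAt_quasiPencil_ne_top_of_periodic {U : Set ℂ} (hU : IsOpen U)
    (hU' : IsPreconnected U) {τ : ℂ} (hτ : τ ≠ 0) (hUτ : ∀ z ∈ U, z + τ ∈ U)
    (hf : DifferentiableOn ℂ f U) (hh : DifferentiableOn ℂ h U)
    (hfτ : ∀ z ∈ U, f (z + τ) = f z) (hhτ : ∀ z ∈ U, h (z + τ) = h z)
    (hne : ∃ z ∈ U, h z ≠ 0) (hz₀ : z₀ ∈ U) (c : ℂ) :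
    meromorphicOrderAt (quasiPencil f h c) z₀ ≠ ⊤ := by
  intro htop
  obtain ⟨z, hz, hhz⟩ := hne
  have hdiff : DifferentiableOn ℂ (quasiPencil f h c) U := by
    unfold quasiPencil
    fun_prop
  have hzero : Set.EqOn (quasiPencil f h c) 0 U :=
    (hdiff.analyticOnNhd hU).eqOn_zero_of_preconnected_of_frequently_eq_zero hU' hz₀
      (meromorphicOrderAt_eq_top_iff.1 htop).frequently
  have hAz : (z - c) * f z + h z = 0 := hzero hz
  have hAzτ : (z + τ - c) * f z + h z = 0 := by
    simpa only [quasiPencil, hfτ z hz, hhτ z hz, Pi.zero_apply] using hzero (hUτ z hz)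
  have hfz : f z = 0 := by
    refine (mul_eq_zero.1 ?_).resolve_left hτ
    linear_combination hAzτ - hAz
  exact hhz (by simpa [hfz] using hAz)

end QuasiPencil

section Moebius

open ComplexConjugate

theorem isOpen_UHP : IsOpen UHP := UpperHalfPlane.isOpen_upperHalfPlaneSet

theorem isPreconnected_UHP : IsPreconnected UHP := (convex_halfSpace_im_gt 0).isPreconnected

theorem jfac_ne_zero (γ : SL2R) {z : ℂ} (hz : z.im ≠ 0) : jfac γ z ≠ 0 :=
  UpperHalfPlane.denom_ne_zero_of_im (γ : GL (Fin 2) ℝ) hz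

theorem moeb_sub_moeb (γ : SL2R) {z w : ℂ} (hz : jfac γ z ≠ 0) (hw : jfac γ w ≠ 0) :
    moeb γ z - moeb γ w = (z - w) / (jfac γ z * jfac γ w) := by
  have hdet : (γ.1 0 0 * γ.1 1 1 - γ.1 0 1 * γ.1 1 0 : ℂ) = 1 :=
    mod_cast (Matrix.det_fin_two γ.1).symm.trans γ.2
  simp only [moeb, jfac] at *
  rw [div_sub_div _ _ hz hw]
  congr 1
  linear_combination (z - w) * hdet

theorem moeb_conj (γ : SL2R) (z : ℂ) : moeb γ (conj z) = conj (moeb γ z) := by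
  simp [moeb]

theorem continuous_jfac (γ : SL2R) : Continuous (jfac γ) := by
  unfold jfac
  fun_prop

theorem hasDerivAt_moeb (γ : SL2R) {z : ℂ} (hz : jfac γ z ≠ 0) :
    HasDerivAt (moeb γ) (jfac γ z ^ 2)⁻¹ z := by
  rw [hasDerivAt_iff_tendsto_slope]
  have hcont : ContinuousAt (fun w ↦ (jfac γ w * jfac γ z)⁻¹) z :=
    ((continuous_jfac γ).continuousAt.mul continuousAt_const).inv₀ (mul_ne_zero hz hz)
  have hlim : Tendsto (fun w ↦ (jfac γ w * jfac γ z)⁻¹) (𝓝[≠] z) (𝓝 (jfac γ z ^ 2)⁻¹) := by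
    simpa only [← pow_two] using hcont.tendsto.mono_left nhdsWithin_le_nhds
  refine hlim.congr' ?_
  filter_upwards [self_mem_nhdsWithin,
    nhdsWithin_le_nhds ((continuous_jfac γ).continuousAt.eventually_ne hz)] with w hw hjw
  have hsub : w - z ≠ 0 := sub_ne_zero.2 hw
  rw [slope_def_field, moeb_sub_moeb γ hjw hz]
  field_simp

theorem jfac_mul_jfac_conj_eq_one {γ : SL2R} {z : ℂ} (hz : z.im ≠ 0) (hfix : moeb γ z = z) :
    jfac γ z * jfac γ (conj z) = 1 := by
  have hz' : (conj z).im ≠ 0 := by simpa using hz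
  have hsub : z - conj z ≠ 0 := by
    rw [Complex.sub_conj]
    simpa using hz
  have h := moeb_sub_moeb γ (jfac_ne_zero γ hz) (jfac_ne_zero γ hz')
  rw [moeb_conj, hfix, eq_div_iff (mul_ne_zero (jfac_ne_zero γ hz) (jfac_ne_zero γ hz'))] at h
  exact mul_left_cancel₀ hsub (h.trans (mul_one _).symm)

end Moebius

section IsQuasimodularPair

open ComplexConjugate

/-- `f` is quasimodular of weight `k` and depth at most `1` on `Γ`, and `h` is the modular form of
weight `k - 2` occurring in its transformation law. No condition is imposed at the cusps. For
`f = f₀ + E₂ f₁` one has `h = α f₁` with `α = 6 / (π i)`. -/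
structure IsQuasimodularPair (Γ : Subgroup SL2R) (k : ℤ) (f h : ℂ → ℂ) : Prop where
  holo_left : DifferentiableOn ℂ f UHP
  holo_right : DifferentiableOn ℂ h UHP
  transform_left : ∀ γ ∈ Γ, ∀ z ∈ UHP,
    f (moeb γ z) = jfac γ z ^ k * f z + (γ.1 1 0 : ℂ) * jfac γ z ^ (k - 1) * h z
  transform_right : ∀ γ ∈ Γ, ∀ z ∈ UHP, h (moeb γ z) = jfac γ z ^ (k - 2) * h z

variable {Γ : Subgroup SL2R} {k : ℤ} {f h : ℂ → ℂ} {γ : SL2R} {z₀ : ℂ}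

theorem IsModularForm.isQuasimodularPair {f₀ f₁ φ : ℂ → ℂ} {α : ℂ}
    (hf₀ : IsModularForm Γ (fun _ ↦ 1) k f₀) (hf₁ : IsModularForm Γ (fun _ ↦ 1) (k - 2) f₁)
    (hφ : IsQuasiWt2 Γ α φ) (hφ_holo : DifferentiableOn ℂ φ UHP) :
    IsQuasimodularPair Γ k (fun z ↦ f₀ z + φ z * f₁ z) (fun z ↦ α * f₁ z) where
  holo_left := hf₀.holo.add (hφ_holo.mul hf₁.holo)
  holo_right := hf₁.holo.const_mul α
  transform_left γ hγ z hz := by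
    have hj : jfac γ z ≠ 0 := jfac_ne_zero γ hz.ne'
    have hφγ : φ (moeb γ z) = jfac γ z ^ 2 * φ z + α * (γ.1 1 0 : ℂ) * jfac γ z := by
      have h := hφ γ hγ z hz
      field_simp at h
      linear_combination h
    rw [hf₀.transform γ hγ z hz, hf₁.transform γ hγ z hz, hφγ, zpow_sub₀ hj, zpow_sub₀ hj]
    field_simp
    ring
  transform_right γ hγ z hz := by
    rw [hf₁.transform γ hγ z hz]
    ring

namespace IsQuasimodularPair

theorem meromorphicAt_left (hfh : IsQuasimodularPair Γ k f h) (hz₀ : z₀ ∈ UHP) :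
    MeromorphicAt f z₀ :=
  (hfh.holo_left.analyticAt (isOpen_UHP.mem_nhds hz₀)).meromorphicAt

theorem meromorphicAt_right (hfh : IsQuasimodularPair Γ k f h) (hz₀ : z₀ ∈ UHP) :
    MeromorphicAt h z₀ :=
  (hfh.holo_right.analyticAt (isOpen_UHP.mem_nhds hz₀)).meromorphicAt

theorem quasiPencil_moeb (hfh : IsQuasimodularPair Γ k f h) (hγ : γ ∈ Γ) {c z : ℂ}
    (hc : jfac γ c ≠ 0) (hz : z ∈ UHP) :
    quasiPencil f h (moeb γ c) (moeb γ z)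
      = jfac γ z ^ (k - 1) * (jfac γ c)⁻¹ * quasiPencil f h c z := by
  have hj : jfac γ z ≠ 0 := jfac_ne_zero γ hz.ne'
  have hcocycle : jfac γ z - jfac γ c = (γ.1 1 0 : ℂ) * (z - c) := by
    simp only [jfac]
    ring
  simp only [quasiPencil]
  rw [moeb_sub_moeb γ hj hc, hfh.transform_left γ hγ z hz, hfh.transform_right γ hγ z hz,
    zpow_sub₀ hj, zpow_sub₀ hj]
  field_simp
  linear_combination -(h z) * hcocycle

theorem zpow_meromorphicOrderAt_quasiPencil (hfh : IsQuasimodularPair Γ k f h) (hγ : γ ∈ Γ)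
    (hz₀ : z₀ ∈ UHP) (hfix : moeb γ z₀ = z₀) {c : ℂ} (hc : jfac γ c ≠ 0) (hcfix : moeb γ c = c)
    {n : ℤ} (hn : meromorphicOrderAt (quasiPencil f h c) z₀ = n) :
    ((jfac γ z₀ ^ 2)⁻¹) ^ n = jfac γ z₀ ^ (k - 1) * (jfac γ c)⁻¹ := by
  have hj : jfac γ z₀ ≠ 0 := jfac_ne_zero γ hz₀.ne'
  refine zpow_deriv_eq_of_eventually_comp_eq_mul
    (χ := fun z ↦ jfac γ z ^ (k - 1) * (jfac γ c)⁻¹)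
    (meromorphicAt_quasiPencil (hfh.meromorphicAt_left hz₀) (hfh.meromorphicAt_right hz₀) c) hn
    (hasDerivAt_moeb γ hj) (inv_ne_zero (pow_ne_zero 2 hj)) hfix
    (((continuous_jfac γ).continuousAt.zpow₀ _ (.inl hj)).mul continuousAt_const) ?_
  filter_upwards [nhdsWithin_le_nhds (isOpen_UHP.mem_nhds hz₀)] with z hz
  simpa only [hcfix] using hfh.quasiPencil_moeb hγ hc hz

theorem dvd_meromorphicOrderAt_quasiPencil_sub (hfh : IsQuasimodularPair Γ k f h) (hγ : γ ∈ Γ)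
    (hz₀ : z₀ ∈ UHP) (hfix : moeb γ z₀ = z₀) {N : ℕ} (hN : IsPrimitiveRoot (jfac γ z₀ ^ 2) N)
    {a b : ℤ} (ha : meromorphicOrderAt (quasiPencil f h z₀) z₀ = a)
    (hb : meromorphicOrderAt (quasiPencil f h (conj z₀)) z₀ = b) : (N : ℤ) ∣ a - b - 1 := by
  have hj : jfac γ z₀ ≠ 0 := jfac_ne_zero γ hz₀.ne'
  have hjj : jfac γ z₀ * jfac γ (conj z₀) = 1 := jfac_mul_jfac_conj_eq_one hz₀.ne' hfix
  have hj' : jfac γ (conj z₀) ≠ 0 := right_ne_zero_of_mul_eq_one hjj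
  have hfix' : moeb γ (conj z₀) = conj z₀ := by rw [moeb_conj, hfix]
  have hA := hfh.zpow_meromorphicOrderAt_quasiPencil hγ hz₀ hfix hj hfix ha
  have hB := hfh.zpow_meromorphicOrderAt_quasiPencil hγ hz₀ hfix hj' hfix' hb
  rw [inv_eq_of_mul_eq_one_left hjj] at hB
  refine (hN.zpow_eq_one_iff_dvd _).1 ?_
  have hj2 : jfac γ z₀ ^ 2 ≠ 0 := pow_ne_zero 2 hj
  rw [_root_.inv_zpow, inv_eq_iff_eq_inv] at hA hB
  rw [zpow_sub₀ hj2, zpow_sub₀ hj2, zpow_one, hA, hB]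
  field_simp

theorem exists_local_exponent_of_moeb_eq_self (hfh : IsQuasimodularPair Γ k f h) (hγ : γ ∈ Γ)
    (hz₀ : z₀ ∈ UHP) (hfix : moeb γ z₀ = z₀) {N : ℕ} (hN₁ : N ≠ 1)
    (hN : IsPrimitiveRoot (jfac γ z₀ ^ 2) N)
    (hne_top : ∀ c, meromorphicOrderAt (quasiPencil f h c) z₀ ≠ ⊤) :
    ∃ n : ℤ, 1 ≤ n ∧ ((N : ℤ) ∣ n - 1 ∨ (N : ℤ) ∣ n + 1) ∧
      Tendsto (fun z ↦ (z - z₀) ^ 2 * Qformula f (quasiWronskian f h) z) (𝓝[≠] z₀)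
        (𝓝 ((1 / 4 - ((n : ℂ) / 2) ^ 2) / (4 * (Real.pi : ℂ) ^ 2))) := by
  obtain ⟨a, ha⟩ := WithTop.ne_top_iff_exists.1 (hne_top z₀)
  obtain ⟨b, hb⟩ := WithTop.ne_top_iff_exists.1 (hne_top (conj z₀))
  have hdvd := hfh.dvd_meromorphicOrderAt_quasiPencil_sub hγ hz₀ hfix hN ha.symm hb.symm
  have hab : a ≠ b := by
    rintro rfl
    refine hN₁ (Nat.dvd_one.1 (Int.natCast_dvd_natCast.1 ?_))
    simpa using hdvd
  have hconj : z₀ ≠ conj z₀ := fun h ↦ hz₀.ne' (Complex.conj_eq_iff_im.1 h.symm)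
  refine ⟨|a - b|, Int.one_le_abs (sub_ne_zero.2 hab), ?_,
    tendsto_sub_sq_mul_Qformula_quasiWronskian (hfh.meromorphicAt_left hz₀)
      (hfh.meromorphicAt_right hz₀) hconj ha.symm hb.symm hab⟩
  rcases abs_choice (a - b) with habs | habs <;> rw [habs]
  · exact .inl hdvd
  · exact .inr ((Int.dvd_neg.2 hdvd).trans (dvd_of_eq (by ring)))

end IsQuasimodularPair

end IsQuasimodularPair

section E2

theorem E2_coe (z : UpperHalfPlane) : E2 z = EisensteinSeries.E2 z := by
  rw [EisensteinSeries.E2_eq_tsum_cexp, E2, tsum_pnat_eq_tsum_succ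
    (f := fun n ↦ (ArithmeticFunction.sigma 1 n : ℂ) *
      Complex.exp (2 * Real.pi * Complex.I * z) ^ n)]
  rfl

theorem differentiableOn_E2 : DifferentiableOn ℂ E2 UHP := by
  refine (UpperHalfPlane.mdifferentiable_iff.1 E2_mdifferentiable).congr fun z hz ↦ ?_
  rw [Function.comp_apply, UpperHalfPlane.ofComplex_apply_of_im_pos hz, ← E2_coe]

theorem isQuasiWt2_E2 : IsQuasiWt2 SL2ZR (6 / ((Real.pi : ℂ) * Complex.I)) E2 := by
  rintro _ ⟨γ, -, rfl⟩ z hz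
  lift z to UpperHalfPlane using hz
  have hslash := congrFun (EisensteinSeries.E2_slash_action γ) z
  have hmoeb : moeb (toR γ) z = (γ • z : UpperHalfPlane) :=
    (UpperHalfPlane.coe_specialLinearGroup_apply γ z).symm
  have hdenom : UpperHalfPlane.denom γ z = jfac (toR γ) z := rfl
  have hentry : ((toR γ).1 1 0 : ℂ) = γ.1 1 0 := by simp [toR]
  have hj : jfac (toR γ) z ≠ 0 := jfac_ne_zero _ z.im_ne_zero
  have hπ : (Real.pi : ℂ) ≠ 0 := mod_cast Real.pi_ne_zero
  rw [ModularForm.SL_slash_apply, Pi.sub_apply, Pi.smul_apply, EisensteinSeries.D2, riemannZeta_two,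
    smul_eq_mul, ← E2_coe, ← E2_coe, ← hmoeb, hdenom] at hslash
  rw [hentry]
  field_simp at hslash ⊢
  linear_combination Complex.I * hslash - 6 * jfac (toR γ) z * γ.1 1 0 * Complex.I_sq

end E2

section SL2Z

theorem toR_mem_SL2ZR (γ : SL2Z) : toR γ ∈ SL2ZR := ⟨γ, trivial, rfl⟩

theorem moeb_toR (γ : SL2Z) (z : ℂ) :
    moeb (toR γ) z = (γ.1 0 0 * z + γ.1 0 1) / (γ.1 1 0 * z + γ.1 1 1) := by
  simp [moeb, toR]

theorem jfac_toR (γ : SL2Z) (z : ℂ) : jfac (toR γ) z = γ.1 1 0 * z + γ.1 1 1 := by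
  simp [jfac, toR]

theorem ρell_mem_UHP : ρell ∈ UHP := by simp [UHP, ρell]

theorem ρell_sq : ρell ^ 2 = ρell - 1 := by
  have hsqrt : ((Real.sqrt 3 : ℝ) : ℂ) ^ 2 = 3 := mod_cast Real.sq_sqrt zero_le_three
  unfold ρell
  linear_combination (1 / 4 : ℂ) * Complex.I ^ 2 * hsqrt + (3 / 4 : ℂ) * Complex.I_sq

theorem isPrimitiveRoot_ρell_sq : IsPrimitiveRoot (ρell ^ 2) 3 := by
  have hcube : (ρell ^ 2) ^ 3 = 1 := by
    linear_combination (ρell ^ 4 + ρell ^ 3 - ρell - 1) * ρell_sq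
  have hne : ρell ^ 2 ≠ 1 := by
    intro h
    have him : ρell.im = 0 := by simpa [ρell_sq] using congrArg Complex.im h
    exact ρell_mem_UHP.ne' him
  rw [← orderOf_eq_prime hcube hne]
  exact IsPrimitiveRoot.orderOf _

theorem moeb_toR_T (z : ℂ) : moeb (toR ModularGroup.T) z = z + 1 := by
  simp [moeb_toR, ModularGroup.coe_T]

theorem jfac_toR_T (z : ℂ) : jfac (toR ModularGroup.T) z = 1 := by
  simp [jfac_toR, ModularGroup.coe_T]

theorem moeb_toR_S (z : ℂ) : moeb (toR ModularGroup.S) z = -z⁻¹ := by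
  simp [moeb_toR, ModularGroup.coe_S, neg_div]

theorem jfac_toR_S (z : ℂ) : jfac (toR ModularGroup.S) z = z := by
  simp [jfac_toR, ModularGroup.coe_S]

theorem moeb_toR_T_mul_S (z : ℂ) :
    moeb (toR (ModularGroup.T * ModularGroup.S)) z = (z - 1) / z := by
  rw [moeb_toR]
  simp [ModularGroup.coe_S, ModularGroup.coe_T, sub_eq_add_neg]

theorem jfac_toR_T_mul_S (z : ℂ) : jfac (toR (ModularGroup.T * ModularGroup.S)) z = z := by
  rw [jfac_toR]
  simp [ModularGroup.coe_S]

theorem IsQuasimodularPair.meromorphicOrderAt_quasiPencil_ne_top {k : ℤ} {f h : ℂ → ℂ}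
    (hfh : IsQuasimodularPair SL2ZR k f h) (hne : ∃ z ∈ UHP, h z ≠ 0) {z₀ : ℂ} (hz₀ : z₀ ∈ UHP)
    (c : ℂ) : meromorphicOrderAt (quasiPencil f h c) z₀ ≠ ⊤ := by
  have hT := toR_mem_SL2ZR ModularGroup.T
  have hTc : (toR ModularGroup.T).1 1 0 = 0 := by simp [toR, ModularGroup.coe_T]
  refine meromorphicOrderAt_quasiPencil_ne_top_of_periodic isOpen_UHP isPreconnected_UHP
    one_ne_zero (fun z hz ↦ ?_) hfh.holo_left hfh.holo_right (fun z hz ↦ ?_) (fun z hz ↦ ?_)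
    hne hz₀ c
  · simpa [UHP] using hz
  · simpa [moeb_toR_T, jfac_toR_T, hTc] using hfh.transform_left _ hT z hz
  · simpa [moeb_toR_T, jfac_toR_T] using hfh.transform_right _ hT z hz

theorem local_exponents_elliptic_SL2Z_general {k : ℤ} {f h : ℂ → ℂ}
    (hfh : IsQuasimodularPair SL2ZR k f h) (hne : ∃ z ∈ UHP, h z ≠ 0) :
    ∃ ni nρ : ℤ, 1 ≤ ni ∧ 1 ≤ nρ ∧ Odd ni ∧ ¬ (3 ∣ nρ) ∧
      Tendsto (fun z ↦ (z - Complex.I) ^ 2 * Qformula f (quasiWronskian f h) z) (𝓝[≠] Complex.I)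
        (𝓝 ((1 / 4 - ((ni : ℂ) / 2) ^ 2) / (4 * (Real.pi : ℂ) ^ 2))) ∧
      Tendsto (fun z ↦ (z - ρell) ^ 2 * Qformula f (quasiWronskian f h) z) (𝓝[≠] ρell)
        (𝓝 ((1 / 4 - ((nρ : ℂ) / 2) ^ 2) / (4 * (Real.pi : ℂ) ^ 2))) := by
  have hI : Complex.I ∈ UHP := by simp [UHP]
  have hρ_ne : ρell ≠ 0 := by
    intro h
    simpa [h] using ρell_sq
  obtain ⟨ni, hni, hni_dvd, hni_lim⟩ := hfh.exists_local_exponent_of_moeb_eq_self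
    (toR_mem_SL2ZR ModularGroup.S) hI (by simp [moeb_toR_S]) (by decide : 2 ≠ 1)
    (by simpa [jfac_toR_S] using IsPrimitiveRoot.neg_one (R := ℂ) 0 (by decide))
    (hfh.meromorphicOrderAt_quasiPencil_ne_top hne hI)
  obtain ⟨nρ, hnρ, hnρ_dvd, hnρ_lim⟩ := hfh.exists_local_exponent_of_moeb_eq_self
    (toR_mem_SL2ZR (ModularGroup.T * ModularGroup.S)) ρell_mem_UHP
    (by rw [moeb_toR_T_mul_S, ← ρell_sq, pow_two, mul_div_cancel_right₀ _ hρ_ne])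
    (by decide : 3 ≠ 1) (by simpa only [jfac_toR_T_mul_S] using isPrimitiveRoot_ρell_sq)
    (hfh.meromorphicOrderAt_quasiPencil_ne_top hne ρell_mem_UHP)
  exact ⟨ni, nρ, hni, hnρ, Int.odd_iff.2 (by lia), by lia, hni_lim, hnρ_lim⟩

end SL2Z

/-- local exponents of `y″ = -4π² Q_f y` at the elliptic points of
`SL(2,ℤ)`: the local exponents at `i` and `ρ` are `1/2 ± κ_i` and `1/2 ± κ_ρ` with
`κ_i, κ_ρ ∈ (1/2)ℕ`, `gcd(2κ_i,2) = gcd(2κ_ρ,3) = 1`. We write `2κ_i = n_i`,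
`2κ_ρ = n_ρ` with `n_i, n_ρ` positive integers. -/
theorem local_exponents_elliptic_SL2Z
    (k : ℤ) (hk : 0 < k) (hkeven : Even k)
    (f₀ f₁ : ℂ → ℂ)
    (hf₀ : IsModularForm SL2ZR (fun _ => 1) k f₀)
    (hf₁ : IsModularForm SL2ZR (fun _ => 1) (k - 2) f₁)
    (hf₁ne : ∃ z ∈ UHP, f₁ z ≠ 0)
    (f W Q : ℂ → ℂ)
    (hf : ∀ z, f z = f₀ z + E2 z * f₁ z)
    (hW : ∀ z, W z = -(f z) ^ 2
      + (6 / ((Real.pi : ℂ) * Complex.I)) * (f₁ z * deriv f z - deriv f₁ z * f z))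
    (hQ : ∀ z, Q z = Qformula f W z)
    (S : Set ℂ) (hS : S = {z | z ∈ UHP ∧ f z ≠ 0 ∧ W z ≠ 0}) :
    ∃ ni nρ : ℤ, 1 ≤ ni ∧ 1 ≤ nρ ∧ Odd ni ∧ ¬ (3 ∣ nρ) ∧
      Tendsto (fun z : ℂ => (z - Complex.I) ^ 2 * Q z) (𝓝[S \ {Complex.I}] Complex.I)
        (𝓝 ((1 / 4 - ((ni : ℂ) / 2) ^ 2) / (4 * (Real.pi : ℂ) ^ 2))) ∧
      Tendsto (fun z : ℂ => (z - ρell) ^ 2 * Q z) (𝓝[S \ {ρell}] ρell)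
        (𝓝 ((1 / 4 - ((nρ : ℂ) / 2) ^ 2) / (4 * (Real.pi : ℂ) ^ 2))) := by
  set h : ℂ → ℂ := fun z ↦ 6 / ((Real.pi : ℂ) * Complex.I) * f₁ z
  have hfh : IsQuasimodularPair SL2ZR k f h := by
    rw [funext hf]
    exact hf₀.isQuasimodularPair hf₁ isQuasiWt2_E2 differentiableOn_E2
  have hne : ∃ z ∈ UHP, h z ≠ 0 := by simpa [h, Real.pi_ne_zero] using hf₁ne
  have hWh : W = quasiWronskian f h :=
    funext fun z ↦ (hW z).trans (quasiWronskian_const_mul _ f f₁ z).symm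
  obtain ⟨ni, nρ, hni, hnρ, hodd, hdvd, hlim_I, hlim_ρ⟩ :=
    local_exponents_elliptic_SL2Z_general hfh hne
  rw [← hWh, ← funext hQ] at hlim_I hlim_ρ
  exact ⟨ni, nρ, hni, hnρ, hodd, hdvd, hlim_I.mono_left (nhdsWithin_mono _ fun _ hz ↦ hz.2),
    hlim_ρ.mono_left (nhdsWithin_mono _ fun _ hz ↦ hz.2)⟩
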